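/- For n > 2, the number C_n(123,231) of cyclic permutations of length n avoiding both patterns 123 and 231 equals: φ(n/2) if n ≡ 0 mod 4; φ((n+2)/4) + φ(n/2) if n ≡ 2 mod 4; and φ((n+1)/2) if n is odd, where φ is Euler's totient function. -/

import Mathlib

/-- A permutation of {1,...,n} is cyclic (a single n-cycle) iff it acts transitively. -/
def IsCyclicPerm {n : ℕ} (p : Equiv.Perm (Fin n)) : Prop :=
  ∀ x y : Fin n, ∃ m : ℕ, (p ^ m) x = y

/-- `p` contains the pattern `q` (given as a word `q 0, q 1, ...`). -/
def Contains {n k : ℕ} (p : Equiv.Perm (Fin n)) (q : Fin k → Fin k) : Prop :=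
  ∃ f : Fin k → Fin n, StrictMono f ∧ ∀ i j : Fin k, q i < q j ↔ p (f i) < p (f j)

def Avoids {n k : ℕ} (p : Equiv.Perm (Fin n)) (q : Fin k → Fin k) : Prop :=
  ¬ Contains p q

def pat123 : Fin 3 → Fin 3 := ![0, 1, 2]
def pat231 : Fin 3 → Fin 3 := ![1, 2, 0]
def pat132 : Fin 3 → Fin 3 := ![0, 2, 1]
def pat321 : Fin 3 → Fin 3 := ![2, 1, 0]
def pat312 : Fin 3 → Fin 3 := ![2, 0, 1]

/-- `p` is the three-layer permutation of the triple `(a,b,c)`, in 0-based form: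
`p_i = n+1-i` for `1 ≤ i ≤ a`, `p_i = a+b+1-i` for `a+1 ≤ i ≤ a+b`,
`p_i = n+b+1-i` for `a+b+1 ≤ i ≤ n` (1-based). -/
def IsTriplePerm (n a b : ℕ) (p : Equiv.Perm (Fin n)) : Prop :=
  ∀ i : Fin n, (p i : ℕ) =
    if (i : ℕ) < a then n - 1 - (i : ℕ)
    else if (i : ℕ) < a + b then a + b - 1 - (i : ℕ)
    else n + b - 1 - (i : ℕ)

/-! The ascents of a permutation avoiding 123 and 231 force it to be a three-layer permutation: the
rotation by `-b` of the last `m = n - a` positions, followed by the reversal of all `n` positions.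
If `n < 2 * a`, its square has a fixed point. Otherwise the first return map to the last `m`
positions is the rotation of `ZMod m` by `-b` followed by the reversal of the first `k = n - 2 * a`
elements.

The reversal `θ` of the remaining elements conjugates this return map `σ` to its inverse and fixes
`0, …, k - 1`. A permutation conjugating an `m`-cycle to its inverse has at most two fixed points,
so `k ≤ 2` if `σ` is a cycle. If `k = 2`, then `θ` attains the bound, so `θ * σ` has no fixed point,
which makes `b` and `m` even. Comparing residues modulo `gcd b m` leaves `gcd b m = 1` for `k ≤ 1`
and `gcd b m = 2` for `k = 2`. Conversely, under these conditions a function invariant under `σ` is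
`b`-periodic, hence constant (if `k = 2`, because `σ` also maps `b` to `1`). Counting the admissible
`b` gives the totients. -/

open Equiv Function

theorem isCycleOn_univ_iff_forall_invariant {α : Type*} {p : Perm α} :
    p.IsCycleOn Set.univ ↔
      ∀ f : α → Prop, (∀ x, f (p x) = f x) → ∀ x y, f x = f y := by
  constructor
  · intro hp f hf x y
    have hpow (j : ℤ) : f ((p ^ j) x) = f x := by
      induction j with
      | zero => rfl
      | succ i ih => rw [add_comm, zpow_one_add, Perm.mul_apply, hf, ih]
      | pred i ih => rw [← ih, ← hf, ← Perm.mul_apply, ← zpow_one_add, add_sub_cancel]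
    obtain ⟨j, rfl⟩ := hp.2 (Set.mem_univ x) (Set.mem_univ y)
    exact (hpow j).symm
  · intro h
    refine ⟨p.bijective.bijOn_univ, fun x _ y _ ↦ ?_⟩
    have hinv (z : α) : p.SameCycle x (p z) = p.SameCycle x z :=
      propext Perm.sameCycle_apply_right
    exact (h _ hinv x y).mp (Perm.SameCycle.refl p x)

-- `σ` is the first return map of `p` to the range of `ι`, which no orbit of `p` leaves for more
-- than one step at a time.
theorem isCycleOn_univ_iff_of_section {α β : Type*} {p : Perm α} {σ : Perm β}
    {π : α → β} {ι : β → α} (hπι : LeftInverse π ι) (hιπ : ∀ x, ι (π x) = x ∨ ι (π x) = p x)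
    (hσ : ∀ y, π (p (ι y)) = σ y) :
    p.IsCycleOn Set.univ ↔ σ.IsCycleOn Set.univ := by
  rw [isCycleOn_univ_iff_forall_invariant, isCycleOn_univ_iff_forall_invariant]
  constructor
  · intro hp f hf
    have hinv (x : α) : f (π (p x)) = f (π x) := by
      obtain hx | hx := hιπ x
      · rw [← hf (π x), ← hσ, hx]
      · rw [← hx, hπι]
    intro y z
    simpa only [comp_apply, hπι y, hπι z] using hp (f ∘ π) hinv (ι y) (ι z)
  · intro hq f hf
    have hret (x : α) : f (ι (π x)) = f x := by
      obtain hx | hx := hιπ x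
      · rw [hx]
      · rw [hx, hf]
    have hinv (y : β) : f (ι (σ y)) = f (ι y) := by rw [← hσ, hret, hf]
    intro x y
    rw [← hret x, ← hret y]
    exact hq (f ∘ ι) hinv _ _

theorem apply_eq_of_mapsTo_of_forall_ne {α β : Type*} {ρ : Perm α} {s : Set α} {f : α → β}
    {e : α} (hfin : s.Finite) (hs : Set.MapsTo ρ s s) (he : e ∈ s)
    (hf : ∀ x ∈ s, x ≠ e → f (ρ x) = f x) : f (ρ e) = f e := by
  by_contra hne
  let t : Set α := {x ∈ s | f x = f e}
  have : Finite s := hfin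
  have : Finite t := hfin.subset (Set.sep_subset _ _)
  have hback : Set.MapsTo ρ.symm t t := by
    rintro x ⟨hxs, hx⟩
    have hys : ρ.symm x ∈ s := Perm.perm_symm_mapsTo_of_mapsTo ρ hs hxs
    have hye : ρ.symm x ≠ e := by
      rintro rfl
      exact hne (by rwa [apply_symm_apply])
    exact ⟨hys, by rw [← hf _ hys hye, apply_symm_apply, hx]⟩
  exact hne (Perm.perm_symm_mapsTo_iff_mapsTo.mp hback (show e ∈ t from ⟨he, rfl⟩)).2

section Reversal

theorem pow_apply_apply_pow_of_semiconjBy_inv {α : Type*} {σ θ : Perm α}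
    (hθ : SemiconjBy θ σ σ⁻¹) {x : α} (hx : θ x = x) (j : ℕ) :
    (σ ^ j) (θ ((σ ^ j) x)) = x := by
  have h : θ * σ ^ j = (σ ^ j)⁻¹ * θ := by simpa only [inv_pow] using (hθ.pow_right j).eq
  rw [← Perm.mul_apply θ, h, Perm.mul_apply, hx, ← Perm.mul_apply, mul_inv_cancel, Perm.one_apply]

variable {α : Type*} [Finite α] {σ θ : Perm α}

theorem pow_apply_eq_self_iff_natCard_dvd (hσ : σ.IsCycleOn Set.univ) {x : α} {j : ℕ} :
    (σ ^ j) x = x ↔ Nat.card α ∣ j := by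
  have := Fintype.ofFinite α
  rw [Nat.card_eq_fintype_card]
  exact Perm.IsCycleOn.pow_apply_eq (s := Finset.univ) (by rwa [Finset.coe_univ])
    (Finset.mem_univ x)

theorem exists_lt_natCard_pow_apply_eq (hσ : σ.IsCycleOn Set.univ) (x y : α) :
    ∃ j < Nat.card α, (σ ^ j) x = y := by
  have := Fintype.ofFinite α
  rw [Nat.card_eq_fintype_card]
  exact Perm.IsCycleOn.exists_pow_eq (s := Finset.univ) (by rwa [Finset.coe_univ])
    (Finset.mem_univ x) (Finset.mem_univ y)

theorem natCard_dvd_two_mul_of_fixed (hσ : σ.IsCycleOn Set.univ) (hθ : SemiconjBy θ σ σ⁻¹) {x : α}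
    {j : ℕ} (hx : θ x = x) (hj : θ ((σ ^ j) x) = (σ ^ j) x) : Nat.card α ∣ 2 * j := by
  have h := pow_apply_apply_pow_of_semiconjBy_inv hθ hx j
  rwa [hj, ← Perm.mul_apply, ← pow_add, ← two_mul, pow_apply_eq_self_iff_natCard_dvd hσ] at h

theorem natCard_dvd_two_mul_add_one_of_fixed (hσ : σ.IsCycleOn Set.univ) (hθ : SemiconjBy θ σ σ⁻¹)
    {x : α} {j : ℕ} (hx : θ x = x) (hj : θ (σ ((σ ^ j) x)) = (σ ^ j) x) :
    Nat.card α ∣ 2 * j + 1 := by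
  have h := pow_apply_apply_pow_of_semiconjBy_inv hθ hx (j + 1)
  rwa [pow_succ' σ j, Perm.mul_apply σ (σ ^ j) x, hj, ← pow_succ', ← Perm.mul_apply, ← pow_add,
    show j + 1 + j = 2 * j + 1 by ring, pow_apply_eq_self_iff_natCard_dvd hσ] at h

theorem two_mul_eq_natCard_of_fixed (hσ : σ.IsCycleOn Set.univ) (hθ : SemiconjBy θ σ σ⁻¹)
    {x : α} {j : ℕ} (hlt : j < Nat.card α) (hx : θ x = x) (hj : θ ((σ ^ j) x) = (σ ^ j) x)
    (hne : x ≠ (σ ^ j) x) : 2 * j = Nat.card α := by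
  obtain ⟨q, hq⟩ := natCard_dvd_two_mul_of_fixed hσ hθ hx hj
  have hj0 : j ≠ 0 := by
    rintro rfl
    exact hne rfl
  have hq0 : q ≠ 0 := by
    rintro rfl
    omega
  have hq2 : q < 2 := by
    by_contra! hq2
    have := Nat.mul_le_mul_left (Nat.card α) hq2
    omega
  obtain rfl : q = 1 := by omega
  rw [hq, mul_one]

theorem eq_of_three_fixed (hσ : σ.IsCycleOn Set.univ) (hθ : SemiconjBy θ σ σ⁻¹) {x y z : α}
    (hx : θ x = x) (hy : θ y = y) (hz : θ z = z) (hxy : x ≠ y) (hxz : x ≠ z) : y = z := by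
  obtain ⟨i, hi, rfl⟩ := exists_lt_natCard_pow_apply_eq hσ x y
  obtain ⟨j, hj, rfl⟩ := exists_lt_natCard_pow_apply_eq hσ x z
  have hi2 := two_mul_eq_natCard_of_fixed hσ hθ hi hx hy hxy
  have hj2 := two_mul_eq_natCard_of_fixed hσ hθ hj hx hz hxz
  rw [show i = j by omega]

theorem apply_apply_ne_of_two_fixed (hσ : σ.IsCycleOn Set.univ) (hθ : SemiconjBy θ σ σ⁻¹)
    {x y : α} (hx : θ x = x) (hy : θ y = y) (hxy : x ≠ y) (w : α) : θ (σ w) ≠ w := by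
  intro hw
  obtain ⟨i, hi, rfl⟩ := exists_lt_natCard_pow_apply_eq hσ x y
  obtain ⟨j, -, rfl⟩ := exists_lt_natCard_pow_apply_eq hσ x w
  have hodd := natCard_dvd_two_mul_add_one_of_fixed hσ hθ hx hw
  rw [← two_mul_eq_natCard_of_fixed hσ hθ hi hx hy hxy] at hodd
  have := (dvd_mul_right 2 i).trans hodd
  omega

end Reversal

theorem exists_add_self_eq_natCast_add_one {m b : ℕ} (h : ¬(2 ∣ b ∧ 2 ∣ m)) :
    ∃ w : ZMod m, w + w = b + 1 := by
  obtain ⟨c, hc⟩ : ∃ c, c + c = b + 1 ∨ c + c = b + 1 + m := by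
    by_cases hb : 2 ∣ b
    · exact ⟨(b + 1 + m) / 2, by omega⟩
    · exact ⟨(b + 1) / 2, by omega⟩
  have hcast : ((c + c : ℕ) : ZMod m) = ((b + 1 : ℕ) : ZMod m) := by
    obtain hc | hc := hc
    · rw [hc]
    · rw [hc, Nat.cast_add _ m, ZMod.natCast_self, add_zero]
  exact ⟨c, by exact_mod_cast hcast⟩

theorem periodic_gcd_of_periodic_natCast {m : ℕ} {β : Type*} {f : ZMod m → β} {b : ℕ}
    (hf : Periodic f (b : ZMod m)) : Periodic f ((b.gcd m : ℕ) : ZMod m) := by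
  have hbezout : ((b.gcd m : ℕ) : ZMod m) = (b.gcdA m : ℤ) * (b : ZMod m) := by
    have := congrArg (Int.cast : ℤ → ZMod m) (Nat.gcd_eq_gcd_ab b m)
    push_cast at this
    rw [this, ZMod.natCast_self, zero_mul, add_zero, mul_comm]
  rw [hbezout]
  exact hf.int_mul _

section ReversedRotation

variable {m k : ℕ} [NeZero m]

theorem val_sub_natCast {b : ℕ} (hb : b ≤ m) (x : ZMod m) :
    (x - b).val = if x.val < b then x.val + m - b else x.val - b := by
  have h : x - b = ((if x.val < b then x.val + m - b else x.val - b : ℕ) : ZMod m) := by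
    split_ifs
    · rw [Nat.cast_sub (by omega), Nat.cast_add, ZMod.natCast_self, add_zero,
        ZMod.natCast_zmod_val]
    · rw [Nat.cast_sub (by omega), ZMod.natCast_zmod_val]
  have hlt := x.val_lt
  rw [h, ZMod.val_natCast_of_lt (by split_ifs <;> omega)]

theorem val_reflect_of_val_lt (hk : k ≤ m) {x : ZMod m} (hx : x.val < k) :
    ((k : ZMod m) - 1 - x).val = k - 1 - x.val := by
  have h : (k : ZMod m) - 1 - x = ((k - 1 - x.val : ℕ) : ZMod m) := by
    rw [Nat.cast_sub (by omega), Nat.cast_sub (by omega), ZMod.natCast_zmod_val, Nat.cast_one]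
  rw [h, ZMod.val_natCast_of_lt (by omega)]

theorem val_reflect_lt_iff (hk : k ≤ m) (x : ZMod m) :
    ((k : ZMod m) - 1 - x).val < k ↔ x.val < k := by
  have hlt (y : ZMod m) (hy : y.val < k) : ((k : ZMod m) - 1 - y).val < k := by
    rw [val_reflect_of_val_lt hk hy]
    omega
  exact ⟨fun h ↦ by simpa only [sub_sub_cancel] using hlt _ h, hlt x⟩

theorem involutive_ite_val_lt_reflect (hk : k ≤ m) :
    Involutive fun x : ZMod m ↦ if x.val < k then (k : ZMod m) - 1 - x else x := by
  intro x
  by_cases hx : x.val < k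
  · simp only [if_pos hx, if_pos ((val_reflect_lt_iff hk x).mpr hx), sub_sub_cancel]
  · simp only [if_neg hx]

/-- The permutation of `ZMod m` reversing the initial segment `0, …, k - 1`. -/
def headReversal (hk : k ≤ m) : Perm (ZMod m) := (involutive_ite_val_lt_reflect hk).toPerm

theorem headReversal_apply (hk : k ≤ m) (x : ZMod m) :
    headReversal hk x = if x.val < k then (k : ZMod m) - 1 - x else x := rfl

theorem val_headReversal (hk : k ≤ m) (x : ZMod m) :
    (headReversal hk x).val = if x.val < k then k - 1 - x.val else x.val := by
  rw [headReversal_apply]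
  split_ifs with hx
  · exact val_reflect_of_val_lt hk hx
  · rfl

theorem headReversal_eq_one (hk : k ≤ m) (hk1 : k ≤ 1) : headReversal hk = 1 := by
  refine Equiv.ext fun x ↦ ZMod.val_injective m ?_
  rw [val_headReversal, Perm.one_apply]
  split_ifs <;> omega

theorem headReversal_headReversal (hk : k ≤ m) (x : ZMod m) :
    headReversal hk (headReversal hk x) = x :=
  involutive_ite_val_lt_reflect hk x

theorem headReversal_reflect (hk : k ≤ m) (x : ZMod m) :
    headReversal hk ((k : ZMod m) - 1 - x) = (k : ZMod m) - 1 - headReversal hk x := by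
  simp only [headReversal_apply, val_reflect_lt_iff hk]
  split_ifs <;> rfl

/-- The permutation `x ↦ k - 1 - x` of `ZMod m` followed by `headReversal`, i.e. the permutation
reversing the final segment `k, …, m - 1`. It conjugates `reversedRotation` to its inverse. -/
def tailReversal (hk : k ≤ m) : Perm (ZMod m) := headReversal hk * Equiv.subLeft ((k : ZMod m) - 1)

/-- Rotation by `-b` on `ZMod m`, followed by the reversal of the first `k` elements. With
`m = n - a` and `k = n - 2 * a` this is the first return map to the last `m` positions of the
three-layer permutation with parameters `n`, `a`, `b`. -/
def reversedRotation (hk : k ≤ m) (b : ℕ) : Perm (ZMod m) :=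
  headReversal hk * Equiv.subRight (b : ZMod m)

theorem tailReversal_apply (hk : k ≤ m) (x : ZMod m) :
    tailReversal hk x = headReversal hk ((k : ZMod m) - 1 - x) := rfl

theorem reversedRotation_apply (hk : k ≤ m) (b : ℕ) (x : ZMod m) :
    reversedRotation hk b x = headReversal hk (x - b) := rfl

theorem tailReversal_apply_of_val_lt (hk : k ≤ m) {x : ZMod m} (hx : x.val < k) :
    tailReversal hk x = x := by
  rw [tailReversal_apply, headReversal_apply, if_pos ((val_reflect_lt_iff hk x).mpr hx),
    sub_sub_cancel]

theorem tailReversal_reversedRotation (hk : k ≤ m) (b : ℕ) (x : ZMod m) :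
    tailReversal hk (reversedRotation hk b x) = (k : ZMod m) - 1 - (x - b) := by
  rw [tailReversal_apply, reversedRotation_apply, ← headReversal_reflect,
    headReversal_headReversal]

theorem semiconjBy_tailReversal (hk : k ≤ m) (b : ℕ) :
    SemiconjBy (tailReversal hk) (reversedRotation hk b) (reversedRotation hk b)⁻¹ := by
  rw [SemiconjBy, eq_inv_mul_iff_mul_eq]
  refine Equiv.ext fun x ↦ ?_
  rw [Perm.mul_apply, Perm.mul_apply, tailReversal_reversedRotation, reversedRotation_apply,
    tailReversal_apply]
  congr 1
  ring

theorem le_two_of_isCycleOn_reversedRotation (hk : k ≤ m) {b : ℕ}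
    (h : (reversedRotation hk b).IsCycleOn Set.univ) : k ≤ 2 := by
  by_contra! hk3
  have hfix (i : ℕ) (hi : i < k) : tailReversal hk (i : ZMod m) = i :=
    tailReversal_apply_of_val_lt hk (by rwa [ZMod.val_natCast_of_lt (by omega)])
  have hne {i j : ℕ} (hi : i < k) (hj : j < k) (hij : i ≠ j) : (i : ZMod m) ≠ j := fun heq ↦
    hij (by simpa only [ZMod.val_natCast_of_lt (hi.trans_le hk),
      ZMod.val_natCast_of_lt (hj.trans_le hk)] using congrArg ZMod.val heq)
  exact hne (i := 1) (j := 2) (by omega) (by omega) (by omega) <|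
    eq_of_three_fixed h (semiconjBy_tailReversal hk b) (hfix 0 (by omega)) (hfix 1 (by omega))
      (hfix 2 (by omega)) (hne (by omega) (by omega) (by omega))
      (hne (by omega) (by omega) (by omega))

theorem even_of_isCycleOn_reversedRotation_two (hm : 2 ≤ m) {b : ℕ}
    (h : (reversedRotation hm b).IsCycleOn Set.univ) : 2 ∣ b ∧ 2 ∣ m := by
  by_contra hodd
  obtain ⟨w, hw⟩ := exists_add_self_eq_natCast_add_one hodd
  have : Fact (1 < m) := ⟨hm⟩
  have h0 : tailReversal hm (0 : ZMod m) = 0 :=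
    tailReversal_apply_of_val_lt hm (by rw [ZMod.val_zero]; omega)
  have h1 : tailReversal hm (1 : ZMod m) = 1 :=
    tailReversal_apply_of_val_lt hm (by rw [ZMod.val_one]; omega)
  refine apply_apply_ne_of_two_fixed h (semiconjBy_tailReversal hm b) h0 h1 zero_ne_one w ?_
  rw [tailReversal_reversedRotation]
  push_cast
  linear_combination -hw

theorem eq_zero_or_eq_of_isCycleOn_reversedRotation (hk : k ≤ m) {b g : ℕ} (hgm : g ∣ m)
    (hgb : g ∣ b) (h : (reversedRotation hk b).IsCycleOn Set.univ) (y : ZMod g) :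
    y = 0 ∨ y = (k : ZMod g) - 1 := by
  let r := ZMod.castHom hgm (ZMod g)
  have hinv (x : ZMod m) : (r (reversedRotation hk b x) = 0 ∨ r (reversedRotation hk b x) = k - 1) =
      (r x = 0 ∨ r x = k - 1) := by
    have hrb : r (x - b) = r x := by
      rw [map_sub, map_natCast, (ZMod.natCast_eq_zero_iff b g).mpr hgb, sub_zero]
    rw [reversedRotation_apply, headReversal_apply]
    split_ifs
    · rw [map_sub, map_sub, hrb, map_natCast, map_one, sub_eq_zero, sub_eq_self, or_comm,
        eq_comm (b := r x)]
    · rw [hrb]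
  obtain ⟨x, rfl⟩ := ZMod.castHom_surjective hgm y
  have hconst := isCycleOn_univ_iff_forall_invariant.mp h (fun x ↦ r x = 0 ∨ r x = k - 1) hinv 0 x
  exact hconst.mp (Or.inl (map_zero r))

theorem gcd_eq_one_of_isCycleOn_reversedRotation (hk : k ≤ m) (hk1 : k ≤ 1) {b : ℕ}
    (h : (reversedRotation hk b).IsCycleOn Set.univ) : b.gcd m = 1 := by
  have hm : 1 ≤ m := NeZero.one_le
  rw [reversedRotation, headReversal_eq_one hk hk1, ← headReversal_eq_one hm le_rfl,
    ← reversedRotation] at h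
  have h1 := eq_zero_or_eq_of_isCycleOn_reversedRotation hm (b.gcd_dvd_right m) (b.gcd_dvd_left m)
    h ((1 : ℕ) : ZMod _)
  rw [Nat.cast_one, sub_self, or_self, ← Nat.cast_one, ZMod.natCast_eq_zero_iff] at h1
  exact Nat.dvd_one.mp h1

theorem gcd_eq_two_of_isCycleOn_reversedRotation_two (hm : 2 ≤ m) {b : ℕ}
    (h : (reversedRotation hm b).IsCycleOn Set.univ) : b.gcd m = 2 := by
  obtain ⟨hb2, hm2⟩ := even_of_isCycleOn_reversedRotation_two hm h
  have hdvd : 2 ∣ b.gcd m := Nat.dvd_gcd hb2 hm2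
  refine Nat.dvd_antisymm ?_ hdvd
  obtain h2 | h2 := eq_zero_or_eq_of_isCycleOn_reversedRotation hm (b.gcd_dvd_right m)
    (b.gcd_dvd_left m) h ((2 : ℕ) : ZMod _)
  · exact (ZMod.natCast_eq_zero_iff _ _).mp h2
  · have h1 : ((1 : ℕ) : ZMod (b.gcd m)) = 0 := by
      push_cast at h2 ⊢
      linear_combination h2
    exact ((ZMod.natCast_eq_zero_iff _ _).mp h1).trans (one_dvd 2)

theorem isCycleOn_reversedRotation_of_gcd_eq_one (hk : k ≤ m) (hk1 : k ≤ 1) {b : ℕ}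
    (hb : b.gcd m = 1) : (reversedRotation hk b).IsCycleOn Set.univ := by
  rw [isCycleOn_univ_iff_forall_invariant]
  intro f hf
  have hper : Periodic f (b : ZMod m) := fun x ↦ by
    have := hf (x + b)
    rwa [reversedRotation_apply, headReversal_eq_one hk hk1, Perm.one_apply, add_sub_cancel_right,
      eq_comm] at this
  have hconst (x : ZMod m) : f x = f 0 := by
    have := (periodic_gcd_of_periodic_natCast hper).nat_mul_eq x.val
    rwa [hb, Nat.cast_one, mul_one, ZMod.natCast_zmod_val] at this
  intro x y
  rw [hconst x, hconst y]

theorem val_add_natCast_mod_two (hm2 : 2 ∣ m) {b : ℕ} (hb2 : 2 ∣ b) (x : ZMod m) :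
    (x + b).val % 2 = x.val % 2 := by
  rw [ZMod.val_add, ZMod.val_natCast, Nat.mod_mod_of_dvd _ hm2, Nat.add_mod,
    Nat.mod_mod_of_dvd b hm2]
  omega

-- `f` is visibly `b`-periodic away from `0` and `1`. These have different parities, so each parity
-- class, being stable under `+ b`, contains a single exceptional point.
theorem periodic_of_invariant_reversedRotation_two (hm : 2 ≤ m) (hm2 : 2 ∣ m) {b : ℕ} (hb2 : 2 ∣ b)
    {β : Type*} {f : ZMod m → β} (hf : ∀ x, f (reversedRotation hm b x) = f x) :
    Periodic f (b : ZMod m) := by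
  have hstep (x : ZMod m) (hx : ¬x.val < 2) : f (x + b) = f x := by
    rw [← hf, reversedRotation_apply, add_sub_cancel_right, headReversal_apply, if_neg hx]
  intro e
  by_cases he : e.val < 2
  · refine apply_eq_of_mapsTo_of_forall_ne (ρ := Equiv.addRight (b : ZMod m))
      (s := {x | x.val % 2 = e.val % 2}) (Set.toFinite _) ?_ rfl ?_
    · exact fun x hx ↦ (val_add_natCast_mod_two hm2 hb2 x).trans hx
    · intro x (hx : x.val % 2 = e.val % 2) hxe
      have hval : x.val ≠ e.val := (ZMod.val_injective m).ne hxe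
      exact hstep x (by omega)
  · exact hstep e he

theorem isCycleOn_reversedRotation_two_of_gcd_eq_two (hm : 2 ≤ m) {b : ℕ} (hb : b.gcd m = 2) :
    (reversedRotation hm b).IsCycleOn Set.univ := by
  rw [isCycleOn_univ_iff_forall_invariant]
  intro f hf
  have hper := periodic_of_invariant_reversedRotation_two hm (hb ▸ b.gcd_dvd_right m)
    (hb ▸ b.gcd_dvd_left m) hf
  have htwo : Periodic f ((2 : ℕ) : ZMod m) := hb ▸ periodic_gcd_of_periodic_natCast hper
  have hone : f 1 = f 0 := by
    have h10 : reversedRotation hm b b = 1 := by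
      rw [reversedRotation_apply, sub_self, headReversal_apply, ZMod.val_zero, if_pos two_pos]
      push_cast
      ring
    rw [← h10, hf, hper.eq]
  have hconst (x : ZMod m) : f x = f 0 := by
    rw [← ZMod.natCast_zmod_val x, ← Nat.mod_add_div' x.val 2, Nat.cast_add, Nat.cast_mul,
      htwo.nat_mul]
    obtain h | h := Nat.mod_two_eq_zero_or_one x.val
    · rw [h, Nat.cast_zero]
    · rw [h, Nat.cast_one, hone]
  intro x y
  rw [hconst x, hconst y]

theorem isCycleOn_reversedRotation_iff (hk : k ≤ m) {b : ℕ} :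
    (reversedRotation hk b).IsCycleOn Set.univ ↔
      k ≤ 1 ∧ b.gcd m = 1 ∨ k = 2 ∧ b.gcd m = 2 := by
  constructor
  · intro h
    obtain hk1 | rfl := Nat.le_succ_iff.mp (le_two_of_isCycleOn_reversedRotation hk h)
    · exact Or.inl ⟨hk1, gcd_eq_one_of_isCycleOn_reversedRotation hk hk1 h⟩
    · exact Or.inr ⟨rfl, gcd_eq_two_of_isCycleOn_reversedRotation_two hk h⟩
  · rintro (⟨hk1, hb⟩ | ⟨rfl, hb⟩)
    · exact isCycleOn_reversedRotation_of_gcd_eq_one hk hk1 hb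
    · exact isCycleOn_reversedRotation_two_of_gcd_eq_two hk hb

end ReversedRotation

section Patterns

variable {n : ℕ} {p : Perm (Fin n)}

theorem contains_iff_of_inverse {k : ℕ} {q s : Fin k → Fin k} (hsq : LeftInverse s q)
    (hqs : RightInverse s q) :
    Contains p q ↔ ∃ f : Fin k → Fin n, StrictMono f ∧ StrictMono (p ∘ f ∘ s) := by
  refine exists_congr fun f ↦ and_congr_right fun _ ↦ ⟨fun h i j hij ↦ ?_, fun h i j ↦ ?_⟩
  · rwa [← hqs i, ← hqs j, h] at hij
  · simpa only [comp_apply, hsq i, hsq j] using (h.lt_iff_lt (a := q i) (b := q j)).symm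

theorem contains_pat123_iff :
    Contains p pat123 ↔ ∃ i j k, i < j ∧ j < k ∧ p i < p j ∧ p j < p k := by
  rw [contains_iff_of_inverse (s := pat123) (by decide) (by decide)]
  constructor
  · rintro ⟨f, hf, hpf⟩
    exact ⟨f 0, f 1, f 2, hf (by decide), hf (by decide), hpf (show 0 < 1 by decide),
      hpf (show 1 < 2 by decide)⟩
  · rintro ⟨i, j, k, hij, hjk, hpij, hpjk⟩
    exact ⟨![i, j, k], by simp [Fin.strictMono_iff_lt_succ, Fin.forall_fin_two, hij, hjk],
      by simp [Fin.strictMono_iff_lt_succ, Fin.forall_fin_two, pat123, hpij, hpjk]⟩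

theorem contains_pat231_iff :
    Contains p pat231 ↔ ∃ i j k, i < j ∧ j < k ∧ p i < p j ∧ p k < p i := by
  rw [contains_iff_of_inverse (s := pat312) (by decide) (by decide)]
  constructor
  · rintro ⟨f, hf, hpf⟩
    exact ⟨f 0, f 1, f 2, hf (by decide), hf (by decide), hpf (show 1 < 2 by decide),
      hpf (show 0 < 1 by decide)⟩
  · rintro ⟨i, j, k, hij, hjk, hpij, hpki⟩
    exact ⟨![i, j, k], by simp [Fin.strictMono_iff_lt_succ, Fin.forall_fin_two, hij, hjk],
      by simp [Fin.strictMono_iff_lt_succ, Fin.forall_fin_two, pat312, hpij, hpki]⟩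

end Patterns

section Ascents

theorem equiv_eq_of_forall_lt_iff_lt {α β : Type*} [LinearOrder α] [LinearOrder β] [WellFoundedLT β]
    {e e' : α ≃ β} (h : ∀ i k, i < k → (e i < e k ↔ e' i < e' k)) : e = e' := by
  have hlt {i k : α} (hik : e i < e k) : e' i < e' k := by
    obtain hlt | rfl | hgt := lt_trichotomy i k
    · exact (h i k hlt).mp hik
    · exact absurd hik (lt_irrefl _)
    · have hle : e' i ≤ e' k := not_lt.mp fun hki ↦ hik.not_gt ((h k i hgt).mpr hki)
      exact hle.lt_of_ne (e'.injective.ne hgt.ne')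
  have hmono : StrictMono (e' ∘ e.symm) := fun x y hxy ↦
    hlt (by rwa [apply_symm_apply, apply_symm_apply])
  have hid : e' ∘ e.symm = id := (hmono.range_inj strictMono_id).mp <| by
    rw [(e'.surjective.comp e.symm.surjective).range_eq, Set.range_id]
  refine Equiv.ext fun i ↦ ?_
  simpa only [comp_apply, symm_apply_apply, id] using (congrFun hid (e i)).symm

theorem apply_lt_apply_iff_of_minimal {α β : Type*} [LinearOrder α] [LinearOrder β] {f : α → β}
    (hf : Injective f) (h123 : ∀ i j k, i < j → j < k → f i < f j → ¬f j < f k)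
    (h231 : ∀ i j k, i < j → j < k → f i < f j → ¬f k < f i) {a c : α}
    (ha : Minimal (fun i ↦ ∃ k, i < k ∧ f i < f k) a)
    (hc : Minimal (fun k ↦ a < k ∧ f a < f k) c) {i k : α} (hik : i < k) :
    f i < f k ↔ a ≤ i ∧ i < c ∧ c ≤ k := by
  have habove {x : α} (hx : c ≤ x) : f a < f x := by
    obtain rfl | hlt := hx.eq_or_lt
    · exact hc.prop.2
    · exact (not_lt.mp (h231 a c x hc.prop.1 hlt hc.prop.2)).lt_of_ne
        (hf.ne (hc.prop.1.trans hlt).ne)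
  have hbelow {x : α} (hax : a ≤ x) (hx : x < c) : f x ≤ f a := by
    obtain rfl | hlt := hax.eq_or_lt
    · exact le_rfl
    · exact not_lt.mp fun h ↦ hc.not_prop_of_lt hx ⟨hlt, h⟩
  constructor
  · intro hfik
    have hai : a ≤ i := not_lt.mp fun h ↦ ha.not_prop_of_lt h ⟨k, hik, hfik⟩
    have hic : i < c := by
      by_contra! hci
      exact h123 a i k (hc.prop.1.trans_le hci) hik (habove hci) hfik
    refine ⟨hai, hic, ?_⟩
    by_contra! hkc
    exact h123 i k c hik hkc hfik
      ((hbelow (hai.trans hik.le) hkc).trans_lt hc.prop.2)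
  · rintro ⟨hai, hic, hck⟩
    exact (hbelow hai hic).trans_lt (habove hck)

end Ascents

namespace IsTriplePerm

variable {n a b : ℕ} {p : Perm (Fin n)}

theorem exists_perm (hab : a + b ≤ n) : ∃ p : Perm (Fin n), IsTriplePerm n a b p := by
  let f (i : Fin n) : Fin n :=
    ⟨if (i : ℕ) < a then n - 1 - i else if (i : ℕ) < a + b then a + b - 1 - i else n + b - 1 - i,
      by split_ifs <;> omega⟩
  have hf : Injective f := by
    intro i k hik
    have hval := congrArg Fin.val hik
    simp only [f] at hval
    ext
    split_ifs at hval <;> omega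
  exact ⟨Equiv.ofBijective f (Finite.injective_iff_bijective.mp hf), fun _ ↦ rfl⟩

theorem unique {q : Perm (Fin n)} (hp : IsTriplePerm n a b p) (hq : IsTriplePerm n a b q) :
    p = q :=
  Equiv.ext fun i ↦ Fin.ext ((hp i).trans (hq i).symm)

theorem lt_iff (hab : a + b ≤ n) (hp : IsTriplePerm n a b p) {i k : Fin n} (hik : i < k) :
    p i < p k ↔ a ≤ i ∧ (i : ℕ) < a + b ∧ a + b ≤ k := by
  rw [Fin.lt_def, hp i, hp k]
  have : (i : ℕ) < k := hik
  split_ifs <;> omega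

theorem avoids (hab : a + b ≤ n) (hp : IsTriplePerm n a b p) :
    Avoids p pat123 ∧ Avoids p pat231 := by
  rw [Avoids, Avoids, contains_pat123_iff, contains_pat231_iff]
  constructor
  · rintro ⟨i, j, k, hij, hjk, hpij, hpjk⟩
    exact ((hp.lt_iff hab hij).mp hpij).2.2.not_gt ((hp.lt_iff hab hjk).mp hpjk).2.1
  · rintro ⟨i, j, k, hij, hjk, hpij, hpki⟩
    obtain ⟨hai, hib, hbj⟩ := (hp.lt_iff hab hij).mp hpij
    have : p i < p k := (hp.lt_iff hab (hij.trans hjk)).mpr ⟨hai, hib, hbj.trans hjk.le⟩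
    exact hpki.not_gt this

theorem params_eq {a' b' : ℕ} (hab : a + b < n) (hb : 0 < b) (hab' : a' + b' < n)
    (hb' : 0 < b') (hp : IsTriplePerm n a b p) (hp' : IsTriplePerm n a' b' p) :
    a = a' ∧ b = b' := by
  have ha := (hp ⟨a, by omega⟩).symm.trans (hp' ⟨a, by omega⟩)
  have ha' := (hp ⟨a', by omega⟩).symm.trans (hp' ⟨a', by omega⟩)
  simp only at ha ha'
  split_ifs at ha ha' <;> omega

theorem isCycleOn_iff_reversedRotation [NeZero (n - a)] (h2a : 2 * a ≤ n) (hab : a + b ≤ n)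
    (hp : IsTriplePerm n a b p) :
    p.IsCycleOn Set.univ ↔
      (reversedRotation (show n - 2 * a ≤ n - a by omega) b).IsCycleOn Set.univ := by
  let ι (y : ZMod (n - a)) : Fin n := ⟨a + y.val, by have := y.val_lt; omega⟩
  let π (x : Fin n) : ZMod (n - a) := ((if (x : ℕ) < a then n - 1 - x - a else x - a : ℕ) : ZMod _)
  have hπ (x : Fin n) : (π x).val = if (x : ℕ) < a then n - 1 - x - a else x - a :=
    ZMod.val_natCast_of_lt (by split_ifs <;> omega)
  have hι (y : ZMod (n - a)) : (ι y : ℕ) = a + y.val := rfl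
  refine isCycleOn_univ_iff_of_section (π := π) (ι := ι) (fun y ↦ ?_) (fun x ↦ ?_) fun y ↦ ?_
  · refine ZMod.val_injective _ ?_
    rw [hπ, hι]
    split_ifs <;> omega
  · simp only [Fin.ext_iff, hι, hπ, hp x]
    split_ifs <;> omega
  · refine ZMod.val_injective _ ?_
    rw [hπ, hp, hι, reversedRotation_apply, val_headReversal, val_sub_natCast (by omega)]
    have := y.val_lt
    split_ifs <;> omega

theorem two_mul_le_of_isCycleOn (hn : 2 < n) (hab : a + b ≤ n) (hp : IsTriplePerm n a b p)
    (h : p.IsCycleOn Set.univ) : 2 * a ≤ n := by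
  by_contra! h2a
  let x : Fin n := ⟨n - a, by omega⟩
  have hx : p (p x) = x := by
    rw [Fin.ext_iff, hp (p x), hp x]
    simp only [x]
    split_ifs <;> omega
  have hdvd := (pow_apply_eq_self_iff_natCard_dvd h (j := 2)).mp hx
  rw [Nat.card_fin] at hdvd
  exact hn.not_ge (Nat.le_of_dvd two_pos hdvd)

theorem isCycleOn_iff (hn : 2 < n) (hab : a + b ≤ n) (hp : IsTriplePerm n a b p) :
    p.IsCycleOn Set.univ ↔
      a = n / 2 ∧ b.gcd (n - a) = 1 ∨ 2 * a + 2 = n ∧ b.gcd (n - a) = 2 := by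
  by_cases h2a : 2 * a ≤ n
  · have : NeZero (n - a) := ⟨by omega⟩
    rw [hp.isCycleOn_iff_reversedRotation h2a hab, isCycleOn_reversedRotation_iff]
    omega
  · refine iff_of_false (fun h ↦ h2a (hp.two_mul_le_of_isCycleOn hn hab h)) ?_
    omega

end IsTriplePerm

theorem isCyclicPerm_iff_isCycleOn {n : ℕ} {p : Perm (Fin n)} :
    IsCyclicPerm p ↔ p.IsCycleOn Set.univ := by
  constructor
  · intro h
    refine ⟨p.bijective.bijOn_univ, fun x _ y _ ↦ ?_⟩
    obtain ⟨j, hj⟩ := h x y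
    exact ⟨j, by rwa [zpow_natCast]⟩
  · intro h x y
    obtain ⟨j, -, hj⟩ := exists_lt_natCard_pow_apply_eq h x y
    exact ⟨j, hj⟩

theorem exists_forall_apply_lt_apply_iff_of_avoids {n : ℕ} {p : Perm (Fin n)}
    (hp : Avoids p pat123) (hp' : Avoids p pat231) :
    ∃ a b, a + b ≤ n ∧
      ∀ i k : Fin n, i < k → (p i < p k ↔ a ≤ i ∧ (i : ℕ) < a + b ∧ a + b ≤ k) := by
  rw [Avoids, contains_pat123_iff] at hp
  rw [Avoids, contains_pat231_iff] at hp'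
  push Not at hp hp'
  by_cases hex : ∃ i k, i < k ∧ p i < p k
  · obtain ⟨a, ha⟩ := exists_minimal_of_wellFoundedLT _ hex
    obtain ⟨c, hc⟩ := exists_minimal_of_wellFoundedLT _ ha.prop
    have hac : (a : ℕ) + (c - a) = c := Nat.add_sub_of_le hc.prop.1.le
    refine ⟨a, c - a, hac.trans_le c.is_lt.le, fun i k hik ↦ ?_⟩
    rw [hac]
    exact apply_lt_apply_iff_of_minimal p.injective
      (fun i j k hij hjk h ↦ (hp i j k hij hjk h).not_gt)
      (fun i j k hij hjk h ↦ (hp' i j k hij hjk h).not_gt) ha hc hik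
  · push Not at hex
    refine ⟨n, 0, le_rfl, fun i k hik ↦ iff_of_false (hex i k hik).not_gt ?_⟩
    omega

theorem exists_isTriplePerm_of_avoids {n : ℕ} {p : Perm (Fin n)} (hp : Avoids p pat123)
    (hp' : Avoids p pat231) : ∃ a b, a + b ≤ n ∧ IsTriplePerm n a b p := by
  obtain ⟨a, b, hab, hasc⟩ := exists_forall_apply_lt_apply_iff_of_avoids hp hp'
  obtain ⟨q, hq⟩ := IsTriplePerm.exists_perm hab
  have hpq : p = q := equiv_eq_of_forall_lt_iff_lt fun i k hik ↦
    (hasc i k hik).trans (hq.lt_iff hab hik).symm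
  exact ⟨a, b, hab, hpq ▸ hq⟩

theorem avoids_iff_exists_isTriplePerm {n : ℕ} {p : Perm (Fin n)} :
    Avoids p pat123 ∧ Avoids p pat231 ↔ ∃ a b, a + b ≤ n ∧ IsTriplePerm n a b p :=
  ⟨fun ⟨h, h'⟩ ↦ exists_isTriplePerm_of_avoids h h', fun ⟨_, _, hab, hp⟩ ↦ hp.avoids hab⟩

section Counting

open Finset
open scoped Nat

variable {n : ℕ}

/-- The pairs `(a, b)` for which the three-layer permutation with parameters `n`, `a`, `b` is
cyclic, when `2 < n`. Since `n - a` is then `(n + 1) / 2` or `n / 2 + 1`, the range of `b` keeps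
the three layers within `n`. -/
def cyclicParameters (n : ℕ) : Finset (ℕ × ℕ) :=
  {n / 2} ×ˢ {b ∈ range ((n + 1) / 2) | b.gcd ((n + 1) / 2) = 1} ∪
    if n % 4 = 2 then {n / 2 - 1} ×ˢ {b ∈ range (n / 2 + 1) | b.gcd (n / 2 + 1) = 2} else ∅

theorem pos_and_add_lt_of_gcd {a b : ℕ} (hn : 2 < n) (hab : a + b ≤ n)
    (h : a = n / 2 ∧ b.gcd (n - a) = 1 ∨ 2 * a + 2 = n ∧ b.gcd (n - a) = 2) :
    0 < b ∧ a + b < n := by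
  have hb0 : b ≠ 0 := by
    rintro rfl
    rw [Nat.gcd_zero_left] at h
    omega
  have hbn : b ≠ n - a := by
    rintro rfl
    rw [Nat.gcd_self] at h
    omega
  omega

theorem mem_cyclicParameters_iff (hn : 2 < n) {t : ℕ × ℕ} :
    t ∈ cyclicParameters n ↔ t.1 + t.2 ≤ n ∧
      (t.1 = n / 2 ∧ t.2.gcd (n - t.1) = 1 ∨ 2 * t.1 + 2 = n ∧ t.2.gcd (n - t.1) = 2) := by
  obtain ⟨a, b⟩ := t
  have hhalf : n - n / 2 = (n + 1) / 2 := by omega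
  have hmem : (a, b) ∈ cyclicParameters n ↔
      a = n / 2 ∧ b < (n + 1) / 2 ∧ b.gcd ((n + 1) / 2) = 1 ∨
        n % 4 = 2 ∧ a = n / 2 - 1 ∧ b < n / 2 + 1 ∧ b.gcd (n / 2 + 1) = 2 := by
    rw [cyclicParameters]
    split_ifs with h4 <;>
      simp only [h4, mem_union, mem_product, mem_singleton, mem_filter, mem_range, notMem_empty,
        true_and, false_and]
  rw [hmem]
  constructor
  · rintro (⟨rfl, hb, hgcd⟩ | ⟨h4, rfl, hb, hgcd⟩)
    · exact ⟨by omega, Or.inl ⟨rfl, by rwa [hhalf]⟩⟩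
    · exact ⟨by omega, Or.inr ⟨by omega, by rwa [show n - (n / 2 - 1) = n / 2 + 1 by omega]⟩⟩
  · rintro ⟨hab, h⟩
    have hlt := pos_and_add_lt_of_gcd hn hab h
    obtain ⟨rfl, hgcd⟩ | ⟨ha, hgcd⟩ := h
    · exact Or.inl ⟨rfl, by omega, by rwa [hhalf] at hgcd⟩
    · have hdvd : 2 ∣ n - a := hgcd ▸ b.gcd_dvd_right (n - a)
      refine Or.inr ⟨by omega, by omega, by omega, ?_⟩
      rwa [show n - a = n / 2 + 1 by omega] at hgcd

theorem cyclic_avoids_iff (hn : 2 < n) {p : Perm (Fin n)} :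
    IsCyclicPerm p ∧ Avoids p pat123 ∧ Avoids p pat231 ↔
      ∃ t ∈ cyclicParameters n, IsTriplePerm n t.1 t.2 p := by
  simp only [isCyclicPerm_iff_isCycleOn, avoids_iff_exists_isTriplePerm, Prod.exists,
    mem_cyclicParameters_iff hn]
  constructor
  · rintro ⟨h, a, b, hab, hp⟩
    exact ⟨a, b, ⟨hab, (hp.isCycleOn_iff hn hab).mp h⟩, hp⟩
  · rintro ⟨a, b, ⟨hab, hgcd⟩, hp⟩
    exact ⟨(hp.isCycleOn_iff hn hab).mpr hgcd, a, b, hab, hp⟩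

theorem card_exists_isTriplePerm {s : Finset (ℕ × ℕ)} (hs : ∀ t ∈ s, 0 < t.2 ∧ t.1 + t.2 < n) :
    Nat.card {p : Perm (Fin n) // ∃ t ∈ s, IsTriplePerm n t.1 t.2 p} = #s := by
  have hex (t : s) : ∃ p : Perm (Fin n), IsTriplePerm n t.1.1 t.1.2 p :=
    IsTriplePerm.exists_perm (hs t t.2).2.le
  choose P hP using hex
  rw [← Nat.card_eq_finsetCard]
  refine (Nat.card_eq_of_bijective
    (fun t : s ↦ (⟨P t, t, t.2, hP t⟩ : {p // ∃ t ∈ s, IsTriplePerm n t.1 t.2 p}))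
    ⟨fun t t' htt' ↦ ?_, ?_⟩).symm
  · have hPt : P t = P t' := congrArg Subtype.val htt'
    obtain ⟨hb, hab⟩ := hs t t.2
    obtain ⟨hb', hab'⟩ := hs t' t'.2
    exact Subtype.ext (Prod.ext_iff.mpr ((hP t).params_eq hab hb hab' hb' (hPt ▸ hP t')))
  · rintro ⟨p, t, ht, hp⟩
    exact ⟨⟨t, ht⟩, Subtype.ext ((hP ⟨t, ht⟩).unique hp)⟩

theorem card_filter_gcd_eq {d m : ℕ} (hd : d ∣ m) : #{b ∈ range m | b.gcd m = d} = φ (m / d) := by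
  simp only [Nat.totient_div_of_dvd hd, Nat.gcd_comm]

theorem card_cyclicParameters :
    #(cyclicParameters n) = φ ((n + 1) / 2) + if n % 4 = 2 then φ ((n + 2) / 4) else 0 := by
  rw [cyclicParameters, card_union_of_disjoint, card_product, card_singleton, one_mul,
    card_filter_gcd_eq (one_dvd _), Nat.div_one]
  · split_ifs with h4
    · rw [card_product, card_singleton, one_mul, card_filter_gcd_eq (by omega)]
      congr 2
      omega
    · rfl
  · split_ifs
    · exact disjoint_product.mpr (Or.inl (disjoint_singleton.mpr (by omega)))
    · exact disjoint_empty_right _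

theorem card_cyclic_avoids (hn : 2 < n) :
    Nat.card {p : Perm (Fin n) // IsCyclicPerm p ∧ Avoids p pat123 ∧ Avoids p pat231} =
      φ ((n + 1) / 2) + if n % 4 = 2 then φ ((n + 2) / 4) else 0 := by
  have hs (t : ℕ × ℕ) (ht : t ∈ cyclicParameters n) : 0 < t.2 ∧ t.1 + t.2 < n := by
    obtain ⟨hab, hgcd⟩ := (mem_cyclicParameters_iff hn).mp ht
    exact pos_and_add_lt_of_gcd hn hab hgcd
  simp only [cyclic_avoids_iff hn]
  rw [card_exists_isTriplePerm hs, card_cyclicParameters]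

end Counting

theorem stmt14 (n : ℕ) (hn : 2 < n) :
    (n % 4 = 0 → Nat.card {p : Equiv.Perm (Fin n) //
        IsCyclicPerm p ∧ Avoids p pat123 ∧ Avoids p pat231} = Nat.totient (n / 2)) ∧
    (n % 4 = 2 → Nat.card {p : Equiv.Perm (Fin n) //
        IsCyclicPerm p ∧ Avoids p pat123 ∧ Avoids p pat231} =
          Nat.totient ((n + 2) / 4) + Nat.totient (n / 2)) ∧
    (Odd n → Nat.card {p : Equiv.Perm (Fin n) //
        IsCyclicPerm p ∧ Avoids p pat123 ∧ Avoids p pat231} =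
          Nat.totient ((n + 1) / 2)) := by
  rw [card_cyclic_avoids hn]
  refine ⟨fun h ↦ ?_, fun h ↦ ?_, fun h ↦ ?_⟩
  · rw [if_neg (by omega), add_zero, show (n + 1) / 2 = n / 2 by omega]
  · rw [if_pos h, add_comm, show (n + 1) / 2 = n / 2 by omega]
  · rw [if_neg (by have := Nat.odd_iff.mp h; omega), add_zero]
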